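/- arXiv:math/0609797 — 3 statements merged into one kernel-verified Lean document; each statement's English description precedes it below -/
import Mathlib

section
/- Let P_43 = lcm(1, …, 43) = 9419588158802421600 and let p(21) = 73, p(22) = 79, p(23) = 83, p(24) = 89 be the 21st through 24th prime numbers. Then each of the four numbers P_43 + 73 = 9419588158802421673, P_43 + 79 = 9419588158802421679, P_43 + 83 = 9419588158802421683, and P_43 + 89 = 9419588158802421689 is prime. -/
/-!
Lucas's converse of Fermat's little theorem: `n` is prime as soon as some residue modulo `n` has
multiplicative order `n - 1`, which takes one modular power for `n - 1` itself and one for each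
prime factor of `n - 1`. The prime factors too large for trial division are certified recursively.
-/

theorem nth_eq_of_count_eq {P : ℕ → Prop} [DecidablePred P] {m n : ℕ} (hm : P m)
    (hcount : Nat.count P m = n) : Nat.nth P n = m :=
  hcount ▸ Nat.nth_count hm

theorem prime_of_lucas_certificate {n : ℕ} (a : ZMod n) (l : List ℕ) (k : ℕ)
    (hprime : ∀ q ∈ l, q.Prime) (hdvd : n - 1 ∣ l.prod ^ k) (hone : a ^ (n - 1) = 1)
    (hne : ∀ q ∈ l, a ^ ((n - 1) / q) ≠ 1) : n.Prime := by
  refine lucas_primality n a hone fun q hq hqn ↦ hne q ?_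
  have hq_dvd_prod : q ∣ l.prod := hq.dvd_of_dvd_pow (hqn.trans hdvd)
  exact mem_list_primes_of_dvd_prod hq.prime (fun r hr ↦ (hprime r hr).prime) hq_dvd_prod

theorem prime_225541129841 : Nat.Prime 225541129841 :=
  prime_of_lucas_certificate 3 [2, 5, 13, 23, 67, 140731] 4
    (hprime := by norm_num)
    (hdvd := by norm_num)
    (hone := by reduce_mod_char)
    (hne := by simp only [List.forall_mem_cons]; reduce_mod_char; decide)

theorem prime_9419588158802421673 : Nat.Prime 9419588158802421673 :=
  prime_of_lucas_certificate 7 [2, 3, 251, 2311, 225541129841] 3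
    (hprime := by simp only [List.forall_mem_cons, prime_225541129841]; norm_num)
    (hdvd := by norm_num)
    (hone := by reduce_mod_char)
    (hne := by simp only [List.forall_mem_cons]; reduce_mod_char; decide)

theorem prime_9419588158802421679 : Nat.Prime 9419588158802421679 :=
  prime_of_lucas_certificate 6 [2, 3, 13, 3011, 8117, 30763, 160621] 1
    (hprime := by norm_num)
    (hdvd := by norm_num)
    (hone := by reduce_mod_char)
    (hne := by simp only [List.forall_mem_cons]; reduce_mod_char; decide)

-- This number is `lcm(1, …, 43) / 82 + 1`, whence its smooth predecessor.
theorem prime_114873026326858801 : Nat.Prime 114873026326858801 :=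
  prime_of_lucas_certificate 79 [2, 3, 5, 7, 11, 13, 17, 19, 23, 29, 31, 37, 43] 4
    (hprime := by norm_num)
    (hdvd := by norm_num)
    (hone := by reduce_mod_char)
    (hne := by simp only [List.forall_mem_cons]; reduce_mod_char; decide)

theorem prime_9419588158802421683 : Nat.Prime 9419588158802421683 :=
  prime_of_lucas_certificate 2 [2, 41, 114873026326858801] 1
    (hprime := by simp only [List.forall_mem_cons, prime_114873026326858801]; norm_num)
    (hdvd := by norm_num)
    (hone := by reduce_mod_char)
    (hne := by simp only [List.forall_mem_cons]; reduce_mod_char; decide)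

theorem prime_353711587 : Nat.Prime 353711587 :=
  prime_of_lucas_certificate 2 [2, 3, 5669, 10399] 1
    (hprime := by norm_num)
    (hdvd := by norm_num)
    (hone := by reduce_mod_char)
    (hne := by simp only [List.forall_mem_cons]; reduce_mod_char; decide)

theorem prime_9419588158802421689 : Nat.Prime 9419588158802421689 :=
  prime_of_lucas_certificate 3 [2, 11, 1523, 198701, 353711587] 3
    (hprime := by simp only [List.forall_mem_cons, prime_353711587]; norm_num)
    (hdvd := by norm_num)
    (hone := by reduce_mod_char)
    (hne := by simp only [List.forall_mem_cons]; reduce_mod_char; decide)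

theorem lcm_plus_prime_is_prime :
    Finset.lcm (Finset.Icc 1 43) id = 9419588158802421600 ∧
    Nat.nth Nat.Prime 20 = 73 ∧ Nat.nth Nat.Prime 21 = 79 ∧
    Nat.nth Nat.Prime 22 = 83 ∧ Nat.nth Nat.Prime 23 = 89 ∧
    Nat.Prime 9419588158802421673 ∧ Nat.Prime 9419588158802421679 ∧
    Nat.Prime 9419588158802421683 ∧ Nat.Prime 9419588158802421689 := by
  have lcm_eq : Finset.lcm (Finset.Icc 1 43) id = 9419588158802421600 := by decide
  have nth_twenty : Nat.nth Nat.Prime 20 = 73 :=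
    nth_eq_of_count_eq (by norm_num) (by decide)
  have nth_twentyOne : Nat.nth Nat.Prime 21 = 79 :=
    nth_eq_of_count_eq (by norm_num) (by decide)
  have nth_twentyTwo : Nat.nth Nat.Prime 22 = 83 :=
    nth_eq_of_count_eq (by norm_num) (by decide)
  have nth_twentyThree : Nat.nth Nat.Prime 23 = 89 :=
    nth_eq_of_count_eq (by norm_num) (by decide)
  exact ⟨lcm_eq, nth_twenty, nth_twentyOne, nth_twentyTwo, nth_twentyThree,
    prime_9419588158802421673, prime_9419588158802421679,
    prime_9419588158802421683, prime_9419588158802421689⟩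
end

section
/- The period P_n = lcm(1, …, n) grows exponentially in n at unit rate: the limit as n → ∞ of log(lcm(1, …, n)) / n equals 1. -/
open Filter Topology

/-!
Since `log lcm(1, …, n) = ψ(n)`, the claim is the prime number theorem `ψ(x) ∼ x`, which follows
from the Wiener–Ikehara theorem because `-ζ'/ζ(s) - 1/(s - 1)` is continuous on `Re s ≥ 1`.

For a summatory function `S`, put `b(u) = e^{-u} S(e^u)`. When the Laplace transform of `b - A`
extends continuously to the imaginary axis, pairing its boundary values with a triangle function
expresses the average of `b - A` against a translated Fejér kernel as the Fourier transform of a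
compactly supported continuous function. The Riemann–Lebesgue lemma makes these averages tend to
zero. As `e^u b(u)` is increasing, `b` cannot drop fast, so its averages against narrower and
narrower kernels control `b` itself and `b(u) → A`.
-/

namespace WienerIkehara

open MeasureTheory Set Complex
open scoped Real FourierTransform

section FejerKernel

/-- The even triangle function supported on `[-l, l]` with peak value `1`. Its Fourier transform is
the Fejér kernel, so averages against that kernel see only a bounded range of frequencies. -/
noncomputable def triangle (l t : ℝ) : ℝ := max 0 (1 - |t| / l)

/-- The Fejér kernel of bandwidth `l` on the real line, `x ↦ l (sin (π l x) / (π l x))²`, normalised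
to have integral `1` for the Fourier transform `∫ e^{-2πitx} f(t) dt`. -/
noncomputable def fejerKernel (l x : ℝ) : ℝ := l * Real.sinc (π * l * x) ^ 2

variable {l : ℝ}

lemma continuous_ofReal_triangle (l : ℝ) : Continuous fun t ↦ (triangle l t : ℂ) := by
  unfold triangle
  fun_prop

lemma triangle_eq_zero (hl : 0 < l) {t : ℝ} (ht : l ≤ |t|) : triangle l t = 0 :=
  max_eq_left (sub_nonpos.2 ((one_le_div hl).2 ht))

lemma triangle_eq_one_sub_div (hl : 0 < l) {t : ℝ} (ht : t ∈ Icc 0 l) :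
    triangle l t = 1 - t / l := by
  rw [triangle, abs_of_nonneg ht.1, max_eq_right (sub_nonneg.2 ((div_le_one hl).2 ht.2))]

lemma hasCompactSupport_ofReal_triangle (hl : 0 < l) :
    HasCompactSupport fun t ↦ (triangle l t : ℂ) :=
  HasCompactSupport.intro (isCompact_Icc (a := -l) (b := l)) fun _ ht ↦
    ofReal_eq_zero.2 (triangle_eq_zero hl (not_le.1 (mt abs_le.1 ht)).le)

lemma integral_one_sub_div_mul_cos (hl : 0 < l) (a : ℝ) :
    ∫ t in 0..l, (1 - t / l) * Real.cos (a * t) = l / 2 * Real.sinc (a * l / 2) ^ 2 := by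
  rcases eq_or_ne a 0 with rfl | ha
  · simp only [zero_mul, Real.cos_zero, mul_one, zero_div, Real.sinc_zero, one_pow]
    rw [intervalIntegral.integral_sub (Continuous.intervalIntegrable (by fun_prop) _ _)
        (Continuous.intervalIntegrable (by fun_prop) _ _), intervalIntegral.integral_div,
      intervalIntegral.integral_const, integral_id]
    simp only [sub_zero, smul_eq_mul, mul_one, ne_eq, OfNat.ofNat_ne_zero, not_false_eq_true,
      zero_pow]
    field_simp
    ring
  have hderiv (t : ℝ) : HasDerivAt
      (fun t ↦ (1 - t / l) * (Real.sin (a * t) / a) - Real.cos (a * t) / (l * a ^ 2))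
      ((1 - t / l) * Real.cos (a * t)) t := by
    have hlin := ((hasDerivAt_id t).div_const l).const_sub 1
    have hat := (hasDerivAt_id t).const_mul a
    refine ((hlin.mul (hat.sin.div_const a)).sub (hat.cos.div_const (l * a ^ 2))).congr_deriv ?_
    simp only [one_div, id_eq, neg_mul, mul_one]
    field_simp
    ring
  rw [intervalIntegral.integral_eq_sub_of_hasDerivAt (fun t _ ↦ hderiv t)
      (Continuous.intervalIntegrable (by fun_prop) _ _),
    Real.sinc_of_ne_zero (by positivity), div_pow, Real.sin_sq_eq_half_sub,
    mul_div_cancel₀ _ two_ne_zero]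
  simp only [zero_div, sub_zero, mul_zero, Real.sin_zero, Real.cos_zero, one_div, mul_inv_rev,
    zero_sub, sub_neg_eq_add]
  field_simp
  ring

lemma fourier_triangle (hl : 0 < l) :
    𝓕 (fun t ↦ (triangle l t : ℂ)) = fun x ↦ (fejerKernel l x : ℂ) := by
  ext x
  have hcont := continuous_ofReal_triangle l
  set f : ℝ → ℂ := fun t ↦ cexp ((-2 * π * t * x : ℝ) * I) * triangle l t
  have hf : Integrable f := Continuous.integrable_of_hasCompactSupport (by fun_prop)
    (hasCompactSupport_ofReal_triangle hl).mul_left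
  have hsymm (t : ℝ) :
      f (-t) + f t = ((2 * (triangle l t * Real.cos (2 * π * x * t)) : ℝ) : ℂ) := by
    have htri : triangle l (-t) = triangle l t := by simp [triangle]
    simp only [f, htri]
    push_cast
    rw [Complex.cos]
    ring_nf
  have hcut : ∫ t in Ioi 0, triangle l t * Real.cos (2 * π * x * t) =
      ∫ t in Ioc 0 l, triangle l t * Real.cos (2 * π * x * t) := by
    refine setIntegral_eq_of_subset_of_forall_sdiff_eq_zero measurableSet_Ioi
      Ioc_subset_Ioi_self fun t ⟨(ht : 0 < t), htl⟩ ↦ ?_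
    have hlt : l ≤ |t| := by
      rw [abs_of_pos ht]
      exact (not_le.1 fun h ↦ htl ⟨ht, h⟩).le
    rw [triangle_eq_zero hl hlt, zero_mul]
  calc 𝓕 (fun t ↦ (triangle l t : ℂ)) x
      = ∫ t, f t := by simp [Real.fourier_real_eq_integral_exp_smul, f]
    _ = ∫ t in Ioi 0, (f (-t) + f t) := by
        rw [integral_add hf.comp_neg.integrableOn hf.integrableOn, integral_comp_neg_Ioi, neg_zero,
          intervalIntegral.integral_Iic_add_Ioi hf.integrableOn hf.integrableOn]
    _ = ((2 * ∫ t in Ioi 0, triangle l t * Real.cos (2 * π * x * t) : ℝ) : ℂ) := by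
        simp_rw [hsymm]
        rw [integral_complex_ofReal, integral_const_mul]
    _ = ((2 * ∫ t in 0..l, (1 - t / l) * Real.cos (2 * π * x * t) : ℝ) : ℂ) := by
        rw [intervalIntegral.integral_of_le hl.le, hcut]
        congr 2
        refine setIntegral_congr_fun measurableSet_Ioc fun t ht ↦ ?_
        simp only [triangle_eq_one_sub_div hl (Ioc_subset_Icc_self ht)]
    _ = fejerKernel l x := by
        rw [integral_one_sub_div_mul_cos hl, fejerKernel]
        ring_nf

lemma fejerKernel_nonneg (hl : 0 ≤ l) (x : ℝ) : 0 ≤ fejerKernel l x := by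
  unfold fejerKernel
  positivity

lemma integrable_sinc_sq : Integrable fun x ↦ Real.sinc x ^ 2 := by
  refine (integrable_inv_one_add_sq.const_mul 2).mono' (by fun_prop) (.of_forall fun x ↦ ?_)
  have hone : Real.sinc x ^ 2 ≤ 1 := (sq_le_one_iff_abs_le_one _).2 (Real.abs_sinc_le_one x)
  have hsin : x ^ 2 * Real.sinc x ^ 2 ≤ 1 := by
    rcases eq_or_ne x 0 with rfl | hx
    · simp
    · rw [← mul_pow, Real.sinc_of_ne_zero hx, mul_div_cancel₀ _ hx]
      exact Real.sin_sq_le_one x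
  rw [Real.norm_of_nonneg (sq_nonneg _), ← div_eq_mul_inv, le_div_iff₀ (by positivity)]
  linarith

lemma integrable_fejerKernel (hl : 0 < l) : Integrable (fejerKernel l) :=
  (integrable_sinc_sq.comp_mul_left' (by positivity)).const_mul l

lemma integral_fejerKernel (hl : 0 < l) : ∫ x, fejerKernel l x = 1 := by
  have hcont := continuous_ofReal_triangle l
  have hinv := congrFun (hcont.fourierInv_fourier_eq
    (hcont.integrable_of_hasCompactSupport (hasCompactSupport_ofReal_triangle hl))
    (by rw [fourier_triangle hl]; exact (integrable_fejerKernel hl).ofReal)) 0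
  rw [fourier_triangle hl, Real.fourierInv_eq'] at hinv
  simpa [triangle, integral_complex_ofReal] using hinv

lemma tendsto_setIntegral_fejerKernel {r : ℝ} (hr : 0 < r) :
    Tendsto (fun l ↦ ∫ x in Icc (-r) r, fejerKernel l x) atTop (𝓝 1) := by
  have hscale (l : ℝ) :
      ∫ x in Icc (-r) r, fejerKernel l x = ∫ x in (l * -r)..(l * r), fejerKernel 1 x := by
    rw [integral_Icc_eq_integral_Ioc, ← intervalIntegral.integral_of_le (by linarith),
      ← intervalIntegral.mul_integral_comp_mul_left, ← intervalIntegral.integral_const_mul]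
    simp only [fejerKernel, mul_one, one_mul, mul_assoc]
  simp_rw [hscale]
  simpa only [integral_fejerKernel one_pos, id] using
    intervalIntegral_tendsto_integral (integrable_fejerKernel one_pos)
      (tendsto_id.atTop_mul_const_of_neg (neg_neg_of_pos hr)) (tendsto_id.atTop_mul_const hr)

end FejerKernel

section LaplaceTransform

/-- The Laplace transform `z ↦ ∫₀^∞ e^{-zu} f(u) du`; it is used only where the integral converges
absolutely. -/
noncomputable def laplaceTransform (f : ℝ → ℂ) (z : ℂ) : ℂ :=
  ∫ u in Ioi (0 : ℝ), cexp (-z * u) * f u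

lemma fourierInv_fourier_mul_eq_integral {V : Type*} [NormedAddCommGroup V]
    [InnerProductSpace ℝ V] [FiniteDimensional ℝ V] [MeasurableSpace V] [BorelSpace V]
    {g φ : V → ℂ} (hg : Integrable g) (hφ : Integrable φ) (y : V) :
    𝓕⁻ (fun t ↦ 𝓕 g t * φ t) y = ∫ u, g u * 𝓕 φ (u - y) := by
  have hφy : Integrable fun t ↦ 𝐞 (inner ℝ t y) • φ t := by
    refine hφ.norm.mono' (.smul (by fun_prop) hφ.1) (.of_forall fun t ↦ ?_)
    rw [Circle.norm_smul]
  calc 𝓕⁻ (fun t ↦ 𝓕 g t * φ t) y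
      = ∫ t, 𝓕 g t • 𝐞 (inner ℝ t y) • φ t := by
        rw [Real.fourierInv_eq]
        simp only [smul_eq_mul, mul_smul_comm]
    _ = ∫ u, g u • 𝓕 (fun t ↦ 𝐞 (inner ℝ t y) • φ t) u := by
        simpa using! VectorFourier.integral_fourierIntegral_smul_eq_flip (L := innerₗ V)
          Real.continuous_fourierChar continuous_inner hg hφy
    _ = ∫ u, g u * 𝓕 φ (u - y) := by
        congr with u
        rw [Real.fourier_eq, Real.fourier_eq, smul_eq_mul]
        congr 2 with t
        rw [smul_smul, ← AddChar.map_add_eq_mul, inner_sub_right]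
        congr 2
        ring

variable {f : ℝ → ℂ} {C : ℝ}

lemma integrableOn_exp_neg_mul_of_bounded (hf : Measurable f) (hC : ∀ u, ‖f u‖ ≤ C) {z : ℂ}
    (hz : 0 < z.re) : IntegrableOn (fun u : ℝ ↦ cexp (-z * u) * f u) (Ioi 0) :=
  (integrableOn_exp_mul_complex_Ioi (by simpa using hz) 0).mul_bdd hf.aestronglyMeasurable
    (.of_forall hC)

lemma fourier_indicator_eq_laplaceTransform (f : ℝ → ℂ) (δ t : ℝ) :
    𝓕 ((Ioi 0).indicator fun u : ℝ ↦ cexp (-δ * u) * f u) t =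
      laplaceTransform f (δ + 2 * π * t * I) := by
  rw [Real.fourier_real_eq_integral_exp_smul, laplaceTransform,
    ← integral_indicator measurableSet_Ioi]
  congr with u
  by_cases hu : u ∈ Ioi (0 : ℝ)
  · simp only [indicator_of_mem hu, smul_eq_mul, ← mul_assoc, ← Complex.exp_add]
    congr 2
    push_cast
    ring
  · simp only [indicator_of_notMem hu, smul_zero]

lemma fourierInv_laplaceTransform_mul {φ : ℝ → ℂ} (hf : Measurable f) (hC : ∀ u, ‖f u‖ ≤ C)
    (hφ : Integrable φ) {δ : ℝ} (hδ : 0 < δ) (y : ℝ) :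
    𝓕⁻ (fun t : ℝ ↦ laplaceTransform f (δ + 2 * π * t * I) * φ t) y =
      ∫ u in Ioi (0 : ℝ), cexp (-δ * u) * (f u * 𝓕 φ (u - y)) := by
  have hint := integrableOn_exp_neg_mul_of_bounded hf hC (z := δ) (by simpa using hδ)
  simp_rw [← fourier_indicator_eq_laplaceTransform]
  rw [fourierInv_fourier_mul_eq_integral (hint.integrable_indicator measurableSet_Ioi) hφ,
    ← integral_indicator measurableSet_Ioi]
  congr with u
  simp only [indicator_apply, ite_mul, zero_mul, mul_assoc]

lemma continuousOn_fourierInv_vertical_mul {G : ℂ → ℂ} (hG : ContinuousOn G {z | 0 ≤ z.re})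
    {φ : ℝ → ℂ} (hφ : Continuous φ) (hsupp : HasCompactSupport φ) (y : ℝ) :
    ContinuousOn (fun δ : ℝ ↦ 𝓕⁻ (fun t : ℝ ↦ G (δ + 2 * π * t * I) * φ t) y) (Ici 0) := by
  simp_rw [Real.fourierInv_eq]
  refine continuousOn_integral_of_compact_support hsupp ?_ fun δ t _ ht ↦ by
    rw [image_eq_zero_of_notMem_tsupport ht, mul_zero, smul_zero]
  have hvert : ContinuousOn (fun p : ℝ × ℝ ↦ G (p.1 + 2 * π * p.2 * I)) (Ici 0 ×ˢ univ) :=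
    hG.comp (by fun_prop) fun p hp ↦ by simpa using hp
  exact ContinuousOn.smul (by fun_prop) (hvert.mul (by fun_prop))

lemma tendsto_integral_exp_neg_mul {h : ℝ → ℂ} (hh : IntegrableOn h (Ioi 0)) :
    Tendsto (fun δ : ℝ ↦ ∫ u in Ioi (0 : ℝ), cexp (-δ * u) * h u) (𝓝[>] 0)
      (𝓝 (∫ u in Ioi (0 : ℝ), h u)) := by
  refine tendsto_integral_filter_of_dominated_convergence (fun u ↦ ‖h u‖)
    (.of_forall fun δ ↦ .mul (by fun_prop) hh.1) ?_ hh.norm (.of_forall fun u ↦ ?_)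
  · filter_upwards [self_mem_nhdsWithin] with δ (hδ : 0 < δ)
    filter_upwards [ae_restrict_mem measurableSet_Ioi] with u (hu : 0 < u)
    rw [norm_mul, Complex.norm_exp]
    refine mul_le_of_le_one_left (norm_nonneg _) (Real.exp_le_one_iff.2 ?_)
    simpa using (mul_pos hδ hu).le
  · have hexp : Continuous fun δ : ℝ ↦ cexp (-δ * u) * h u := by fun_prop
    simpa using (hexp.tendsto 0).mono_left nhdsWithin_le_nhds

variable {G : ℂ → ℂ} {φ : ℝ → ℂ}

lemma fourierInv_boundary_mul (hf : Measurable f) (hC : ∀ u, ‖f u‖ ≤ C)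
    (hG : ContinuousOn G {z | 0 ≤ z.re}) (hfG : ∀ z : ℂ, 0 < z.re → laplaceTransform f z = G z)
    (hφ : Continuous φ) (hsupp : HasCompactSupport φ) (hφ' : Integrable (𝓕 φ)) (y : ℝ) :
    𝓕⁻ (fun t : ℝ ↦ G (2 * π * t * I) * φ t) y = ∫ u in Ioi (0 : ℝ), f u * 𝓕 φ (u - y) := by
  have hright := tendsto_integral_exp_neg_mul
    ((hφ'.comp_sub_right y).bdd_mul hf.aestronglyMeasurable (.of_forall hC)).integrableOn
  have hleft : Tendsto (fun δ : ℝ ↦ 𝓕⁻ (fun t : ℝ ↦ G (δ + 2 * π * t * I) * φ t) y) (𝓝[>] 0)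
      (𝓝 (𝓕⁻ (fun t : ℝ ↦ G (2 * π * t * I) * φ t) y)) := by
    simpa using ((continuousOn_fourierInv_vertical_mul hG hφ hsupp y) 0 self_mem_Ici).mono_left
      (nhdsWithin_mono _ Ioi_subset_Ici_self)
  refine tendsto_nhds_unique hleft (hright.congr' ?_)
  filter_upwards [self_mem_nhdsWithin] with δ (hδ : 0 < δ)
  rw [← fourierInv_laplaceTransform_mul hf hC (hφ.integrable_of_hasCompactSupport hsupp) hδ]
  congr! 2 with t
  rw [hfG _ (by simpa using hδ)]

lemma tendsto_integral_mul_fourier_sub (hf : Measurable f) (hC : ∀ u, ‖f u‖ ≤ C)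
    (hG : ContinuousOn G {z | 0 ≤ z.re}) (hfG : ∀ z : ℂ, 0 < z.re → laplaceTransform f z = G z)
    (hφ : Continuous φ) (hsupp : HasCompactSupport φ) (hφ' : Integrable (𝓕 φ)) :
    Tendsto (fun y ↦ ∫ u in Ioi (0 : ℝ), f u * 𝓕 φ (u - y)) atTop (𝓝 0) := by
  simp_rw [← fourierInv_boundary_mul hf hC hG hfG hφ hsupp hφ', Real.fourierInv_eq_fourier_neg]
  exact (Real.zero_at_infty_fourier _).comp (tendsto_neg_atTop_atBot.mono_right atBot_le_cocompact)

end LaplaceTransform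

section Tauberian

variable {b K : ℝ → ℝ} {A C r : ℝ}

lemma measurable_of_monotone_exp_mul (hmono : Monotone fun u ↦ rexp u * b u) : Measurable b := by
  have hb : b = fun u ↦ rexp (-u) * (rexp u * b u) := by
    ext u
    rw [← mul_assoc, ← Real.exp_add, neg_add_cancel, Real.exp_zero, one_mul]
  rw [hb]
  exact .mul (by fun_prop) hmono.measurable

lemma le_exp_sub_mul_of_monotone (hmono : Monotone fun u ↦ rexp u * b u) {u w : ℝ} (huw : u ≤ w) :
    b u ≤ rexp (w - u) * b w := by
  rw [Real.exp_sub, div_mul_eq_mul_div, le_div_iff₀' (Real.exp_pos u)]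
  exact hmono huw

lemma le_exp_two_mul_of_monotone (hmono : Monotone fun u ↦ rexp u * b u) (h0 : ∀ u, 0 ≤ b u)
    {u w : ℝ} (huw : u ≤ w) (hwu : w ≤ u + 2 * r) : b u ≤ rexp (2 * r) * b w := by
  refine (le_exp_sub_mul_of_monotone hmono huw).trans ?_
  gcongr
  · exact h0 w
  · linarith

lemma integrable_comp_add_mul (hb : Measurable b) (h0 : ∀ u, 0 ≤ b u) (hC : ∀ u, b u ≤ C)
    (hK : Integrable K) (y : ℝ) : Integrable fun v ↦ b (y + v) * K v :=
  hK.bdd_mul (c := C) (hb.comp (measurable_const_add y)).aestronglyMeasurable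
    (.of_forall fun _ ↦ (Real.norm_of_nonneg (h0 _)).trans_le (hC _))

lemma mul_setIntegral_Icc_le_integral (hmono : Monotone fun u ↦ rexp u * b u)
    (h0 : ∀ u, 0 ≤ b u) (hC : ∀ u, b u ≤ C) (hK0 : ∀ v, 0 ≤ K v) (hK : Integrable K) (y : ℝ) :
    b (y - r) * ∫ v in Icc (-r) r, K v ≤ rexp (2 * r) * ∫ v, b (y + v) * K v := by
  have hint := integrable_comp_add_mul (measurable_of_monotone_exp_mul hmono) h0 hC hK y
  calc b (y - r) * ∫ v in Icc (-r) r, K v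
      = ∫ v in Icc (-r) r, b (y - r) * K v := (integral_const_mul _ _).symm
    _ ≤ ∫ v in Icc (-r) r, rexp (2 * r) * (b (y + v) * K v) := by
        refine setIntegral_mono_on (hK.const_mul _).integrableOn (hint.const_mul _).integrableOn
          measurableSet_Icc fun v hv ↦ ?_
        rw [← mul_assoc]
        exact mul_le_mul_of_nonneg_right (le_exp_two_mul_of_monotone hmono h0
          (by linarith [hv.1]) (by linarith [hv.2])) (hK0 v)
    _ ≤ rexp (2 * r) * ∫ v, b (y + v) * K v := by
        rw [integral_const_mul]
        exact mul_le_mul_of_nonneg_left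
          (setIntegral_le_integral hint (.of_forall fun v ↦ mul_nonneg (h0 _) (hK0 v)))
          (Real.exp_pos _).le

lemma integral_le_mul_setIntegral_Icc_add (hmono : Monotone fun u ↦ rexp u * b u)
    (h0 : ∀ u, 0 ≤ b u) (hC : ∀ u, b u ≤ C) (hK0 : ∀ v, 0 ≤ K v) (hK : Integrable K) (y : ℝ) :
    ∫ v, b (y + v) * K v ≤ rexp (2 * r) * b (y + r) * (∫ v in Icc (-r) r, K v) +
      C * ((∫ v, K v) - ∫ v in Icc (-r) r, K v) := by
  have hint := integrable_comp_add_mul (measurable_of_monotone_exp_mul hmono) h0 hC hK y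
  rw [← integral_add_compl measurableSet_Icc hint, ← setIntegral_compl measurableSet_Icc hK,
    ← integral_const_mul, ← integral_const_mul]
  refine add_le_add (setIntegral_mono_on hint.integrableOn (hK.const_mul _).integrableOn
    measurableSet_Icc fun v hv ↦ ?_) (setIntegral_mono hint.integrableOn
    (hK.const_mul _).integrableOn fun v ↦ mul_le_mul_of_nonneg_right (hC _) (hK0 v))
  exact mul_le_mul_of_nonneg_right (le_exp_two_mul_of_monotone hmono h0
    (by linarith [hv.2]) (by linarith [hv.1])) (hK0 v)

variable {ι : Type*} {L : Filter ι} [L.NeBot] {F : ι → ℝ → ℝ}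

theorem tendsto_of_tendsto_integral_approxIdentity (hmono : Monotone fun u ↦ rexp u * b u)
    (h0 : ∀ u, 0 ≤ b u) (hC : ∀ u, b u ≤ C) (hF0 : ∀ i v, 0 ≤ F i v)
    (hF : ∀ i, Integrable (F i)) (hF1 : ∀ i, ∫ v, F i v = 1)
    (hFr : ∀ r > 0, Tendsto (fun i ↦ ∫ v in Icc (-r) r, F i v) L (𝓝 1))
    (hA : ∀ i, Tendsto (fun y ↦ ∫ v, b (y + v) * F i v) atTop (𝓝 A)) :
    Tendsto b atTop (𝓝 A) := by
  have hexp (a : ℝ) : Tendsto (fun r : ℝ ↦ rexp (2 * r) * a) (𝓝[>] 0) (𝓝 a) := by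
    have hcont : Continuous fun r : ℝ ↦ rexp (2 * r) * a := by fun_prop
    simpa using (hcont.tendsto 0).mono_left nhdsWithin_le_nhds
  refine tendsto_order.2 ⟨fun a ha ↦ ?_, fun a ha ↦ ?_⟩
  · obtain ⟨r, har, hr : 0 < r⟩ :=
      (((hexp a).eventually_lt_const ha).and self_mem_nhdsWithin).exists
    have hlim : Tendsto (fun i ↦ rexp (2 * r) * a * (∫ v in Icc (-r) r, F i v) +
        C * (1 - ∫ v in Icc (-r) r, F i v)) L (𝓝 (rexp (2 * r) * a)) := by
      simpa using ((hFr r hr).const_mul (rexp (2 * r) * a)).add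
        (((hFr r hr).const_sub 1).const_mul C)
    obtain ⟨i, hi, hipos⟩ := ((hlim.eventually_lt_const har).and
      ((hFr r hr).eventually_const_lt one_pos)).exists
    filter_upwards [((hA i).comp
      (tendsto_atTop_add_const_right _ (-r) tendsto_id)).eventually_const_lt hi] with y hy
    have hupper := integral_le_mul_setIntegral_Icc_add (r := r) hmono h0 hC (hF0 i) (hF i) (y - r)
    rw [hF1, sub_add_cancel] at hupper
    have := add_lt_add_iff_right _ |>.1 (hy.trans_le hupper)
    exact lt_of_mul_lt_mul_left (lt_of_mul_lt_mul_right this hipos.le) (Real.exp_pos _).le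
  · obtain ⟨r, har, hr : 0 < r⟩ :=
      (((hexp A).eventually_lt_const ha).and self_mem_nhdsWithin).exists
    obtain ⟨i, hi, hipos⟩ := ((((hFr r hr).const_mul a).eventually_const_lt
      (by simpa using har)).and ((hFr r hr).eventually_const_lt one_pos)).exists
    filter_upwards [(((hA i).comp (tendsto_atTop_add_const_right _ r tendsto_id)).const_mul
      (rexp (2 * r))).eventually_lt_const hi] with y hy
    have hlower := mul_setIntegral_Icc_le_integral (r := r) hmono h0 hC (hF0 i) (hF i) (y + r)
    rw [add_sub_cancel_right] at hlower
    exact lt_of_mul_lt_mul_right (hlower.trans_lt hy) hipos.le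

end Tauberian

section WienerIkehara

variable {f b : ℝ → ℝ} {G : ℂ → ℂ} {A C : ℝ}

lemma tendsto_integral_mul_fejerKernel_sub (hf : Measurable f) (hC : ∀ u, |f u| ≤ C)
    (hG : ContinuousOn G {z | 0 ≤ z.re})
    (hfG : ∀ z : ℂ, 0 < z.re → laplaceTransform (fun u ↦ f u) z = G z) {l : ℝ} (hl : 0 < l) :
    Tendsto (fun y ↦ ∫ u in Ioi (0 : ℝ), f u * fejerKernel l (u - y)) atTop (𝓝 0) := by
  have hlim := tendsto_integral_mul_fourier_sub (f := fun u ↦ (f u : ℂ)) (by fun_prop)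
    (fun u ↦ (norm_real _).trans_le (hC u)) hG hfG
    (continuous_ofReal_triangle l) (hasCompactSupport_ofReal_triangle hl)
    (by rw [fourier_triangle hl]; exact (integrable_fejerKernel hl).ofReal)
  rw [fourier_triangle hl] at hlim
  rw [← tendsto_ofReal_iff, ofReal_zero]
  simpa only [← ofReal_mul, integral_complex_ofReal] using hlim

lemma tendsto_integral_Ioi_comp_sub {K : ℝ → ℝ} (hK : Integrable K) :
    Tendsto (fun y ↦ ∫ u in Ioi (0 : ℝ), K (u - y)) atTop (𝓝 (∫ v, K v)) := by
  have hshift (y : ℝ) : ∫ u in Ioi (0 : ℝ), K (u - y) = ∫ v in Ioi (-y), K v := by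
    rw [← integral_indicator measurableSet_Ioi, ← integral_indicator measurableSet_Ioi,
      ← integral_add_right_eq_self _ y]
    congr with u
    simp [indicator_apply, neg_lt_iff_pos_add]
  simp_rw [hshift]
  exact (aecover_Ioi tendsto_neg_atTop_atBot).integral_tendsto_of_countably_generated hK

lemma tendsto_integral_mul_fejerKernel_sub_of_laplaceTransform_sub (hb : Measurable b)
    (h0 : ∀ u, 0 ≤ b u) (hC : ∀ u, b u ≤ C) (hG : ContinuousOn G {z | 0 ≤ z.re})
    (hbG : ∀ z : ℂ, 0 < z.re → laplaceTransform (fun u ↦ ((b u - A : ℝ) : ℂ)) z = G z)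
    {l : ℝ} (hl : 0 < l) :
    Tendsto (fun y ↦ ∫ u in Ioi (0 : ℝ), b u * fejerKernel l (u - y)) atTop (𝓝 A) := by
  have hbound (u : ℝ) : |b u - A| ≤ C + |A| :=
    (abs_sub _ _).trans (add_le_add_left ((abs_of_nonneg (h0 u)).trans_le (hC u)) _)
  have hdiff := tendsto_integral_mul_fejerKernel_sub (by fun_prop) hbound hG hbG hl
  have hmass := (tendsto_integral_Ioi_comp_sub (integrable_fejerKernel hl)).const_mul A
  rw [integral_fejerKernel hl, mul_one] at hmass
  refine (zero_add A ▸ hdiff.add hmass).congr fun y ↦ ?_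
  have hK := (integrable_fejerKernel hl).comp_sub_right y
  rw [← integral_const_mul, ← integral_add
    (hK.bdd_mul (c := C + |A|) (by fun_prop) (.of_forall hbound)).integrableOn
    (hK.const_mul A).integrableOn]
  congr with u
  ring

theorem tendsto_of_laplaceTransform_sub (hmono : Monotone fun u ↦ rexp u * b u)
    (h0 : ∀ u, 0 ≤ b u) (hC : ∀ u, b u ≤ C) (hG : ContinuousOn G {z | 0 ≤ z.re})
    (hbG : ∀ z : ℂ, 0 < z.re → laplaceTransform (fun u ↦ ((b u - A : ℝ) : ℂ)) z = G z) :
    Tendsto b atTop (𝓝 A) := by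
  have hmono' : Monotone fun u ↦ rexp u * (Ioi 0).indicator b u := by
    intro u w huw
    by_cases hu : u ∈ Ioi (0 : ℝ)
    · simpa [hu, mem_Ioi.2 (hu.trans_le huw)] using hmono huw
    · simpa [hu] using mul_nonneg (Real.exp_pos w).le (indicator_nonneg (fun v _ ↦ h0 v) w)
  have hpos (i : ℕ) : (0 : ℝ) < i + 1 := by positivity
  have hcut : Tendsto ((Ioi 0).indicator b) atTop (𝓝 A) := by
    refine tendsto_of_tendsto_integral_approxIdentity (L := atTop)
      (F := fun i : ℕ ↦ fejerKernel (i + 1)) hmono' (indicator_nonneg fun v _ ↦ h0 v)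
      (fun u ↦ (indicator_le_self' (fun v _ ↦ h0 v) u).trans (hC u))
      (fun i ↦ fejerKernel_nonneg (hpos i).le) (fun i ↦ integrable_fejerKernel (hpos i))
      (fun i ↦ integral_fejerKernel (hpos i))
      (fun r hr ↦ (tendsto_setIntegral_fejerKernel hr).comp
        (tendsto_atTop_add_const_right _ 1 tendsto_natCast_atTop_atTop)) fun i ↦ ?_
    refine (tendsto_integral_mul_fejerKernel_sub_of_laplaceTransform_sub
      (measurable_of_monotone_exp_mul hmono) h0 hC hG hbG (hpos i)).congr fun y ↦ ?_
    rw [← integral_indicator measurableSet_Ioi, ← integral_add_left_eq_self _ y]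
    congr with v
    simp [indicator_apply]
  refine hcut.congr' ?_
  filter_upwards [Ioi_mem_atTop 0] with u hu using indicator_of_mem hu b

end WienerIkehara

section DirichletSeries

variable {f : ℕ → ℝ} {A C : ℝ}

lemma monotone_sum_Icc_floor (hf : ∀ n, 0 ≤ f n) :
    Monotone fun x : ℝ ↦ ∑ k ∈ Finset.Icc 1 ⌊x⌋₊, f k := fun _ _ hxy ↦
  Finset.sum_le_sum_of_subset_of_nonneg (Finset.Icc_subset_Icc_right (Nat.floor_mono hxy))
    fun k _ _ ↦ hf k

lemma sum_Icc_floor_div_le (hC : ∀ n : ℕ, ∑ k ∈ Finset.Icc 1 n, f k ≤ C * n) (hC0 : 0 ≤ C)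
    {x : ℝ} (hx : 0 < x) : (∑ k ∈ Finset.Icc 1 ⌊x⌋₊, f k) / x ≤ C := by
  rw [div_le_iff₀ hx]
  exact (hC _).trans (by gcongr; exact Nat.floor_le hx.le)

lemma LSeries_eq_mul_laplaceTransform (hf : ∀ n, 0 ≤ f n)
    (hC : ∀ n : ℕ, ∑ k ∈ Finset.Icc 1 n, f k ≤ C * n) {s : ℂ} (hs : 1 < s.re) :
    LSeries (fun n ↦ f n) s = s * laplaceTransform
      (fun u ↦ (((∑ k ∈ Finset.Icc 1 ⌊rexp u⌋₊, f k) / rexp u : ℝ) : ℂ)) (s - 1) := by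
  have hO : (fun n : ℕ ↦ ∑ k ∈ Finset.Icc 1 n, f k) =O[atTop] fun n : ℕ ↦ (n : ℝ) ^ (1 : ℝ) := by
    refine Asymptotics.IsBigO.of_bound C (.of_forall fun n ↦ ?_)
    rw [Real.norm_of_nonneg (Finset.sum_nonneg fun k _ ↦ hf k), Real.rpow_one, Real.norm_natCast]
    exact hC n
  rw [LSeries_eq_mul_integral_of_nonneg f zero_le_one hs hO hf, ← Real.exp_zero,
    ← integral_comp_exp_Ioi, laplaceTransform]
  congr with u
  have hpow : (rexp u : ℂ) ^ (-(s + 1)) =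
      cexp (-(s - 1) * u) * ((rexp u : ℂ)⁻¹ * (rexp u : ℂ)⁻¹) := by
    rw [cpow_def_of_ne_zero (by exact_mod_cast (Real.exp_pos u).ne'),
      ← ofReal_log (Real.exp_pos u).le, Real.log_exp, ofReal_exp, ← Complex.exp_neg,
      ← Complex.exp_add, ← Complex.exp_add]
    ring_nf
  rw [hpow, real_smul]
  have hexp : (rexp u : ℂ) ≠ 0 := by exact_mod_cast (Real.exp_pos u).ne'
  push_cast at hexp ⊢
  field_simp

lemma laplaceTransform_sub_const {b : ℝ → ℝ} (hb : Measurable b) (hC : ∀ u, |b u| ≤ C) {z : ℂ}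
    (hz : 0 < z.re) : laplaceTransform (fun u ↦ ((b u - A : ℝ) : ℂ)) z =
      laplaceTransform (fun u ↦ (b u : ℂ)) z - A / z := by
  have hA : ∫ u in Ioi (0 : ℝ), cexp (-z * u) * A = A / z := by
    rw [integral_mul_const, integral_exp_mul_complex_Ioi (by simpa using hz)]
    simp [div_eq_inv_mul]
  simp only [laplaceTransform, ofReal_sub, mul_sub]
  rw [integral_sub (integrableOn_exp_neg_mul_of_bounded (by fun_prop)
      (fun u ↦ (norm_real _).trans_le (hC u)) hz)
    (integrableOn_exp_neg_mul_of_bounded measurable_const (fun _ ↦ le_rfl) hz), hA]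

theorem tendsto_sum_div_of_LSeries {G : ℂ → ℂ} (hf : ∀ n, 0 ≤ f n)
    (hC : ∀ n : ℕ, ∑ k ∈ Finset.Icc 1 n, f k ≤ C * n) (hG : ContinuousOn G {s | 1 ≤ s.re})
    (hfG : ∀ s : ℂ, 1 < s.re → G s = LSeries (fun n ↦ f n) s - A / (s - 1)) :
    Tendsto (fun x : ℝ ↦ (∑ k ∈ Finset.Icc 1 ⌊x⌋₊, f k) / x) atTop (𝓝 A) := by
  have hC0 : 0 ≤ C := (hf 1).trans (by simpa using hC 1)
  have h0 (x : ℝ) : 0 ≤ ∑ k ∈ Finset.Icc 1 ⌊x⌋₊, f k := Finset.sum_nonneg fun k _ ↦ hf k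
  let b : ℝ → ℝ := fun u ↦ (∑ k ∈ Finset.Icc 1 ⌊rexp u⌋₊, f k) / rexp u
  have hb0 (u : ℝ) : 0 ≤ b u := div_nonneg (h0 _) (Real.exp_pos u).le
  have hbC (u : ℝ) : b u ≤ C := sum_Icc_floor_div_le hC hC0 (Real.exp_pos u)
  have hbmono : Monotone fun u ↦ rexp u * b u := by
    simp only [b, mul_div_cancel₀ _ (Real.exp_ne_zero _)]
    exact (monotone_sum_Icc_floor hf).comp Real.exp_monotone
  have hG' : ContinuousOn (fun z : ℂ ↦ (G (1 + z) - A) / (1 + z)) {z | 0 ≤ z.re} := by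
    refine .div ((hG.comp (by fun_prop) fun z hz ↦ ?_).sub continuousOn_const) (by fun_prop)
      fun z (hz : 0 ≤ z.re) ↦ ne_zero_of_re_pos ?_
    · simpa using hz
    · rw [add_re, one_re]
      linarith
  rw [← Real.tendsto_comp_exp_atTop]
  refine tendsto_of_laplaceTransform_sub hbmono hb0 hbC hG' fun z hz ↦ ?_
  have hs : 1 < (1 + z).re := by simpa using hz
  rw [laplaceTransform_sub_const (measurable_of_monotone_exp_mul hbmono)
    (fun u ↦ (abs_of_nonneg (hb0 u)).trans_le (hbC u)) hz, hfG _ hs,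
    LSeries_eq_mul_laplaceTransform hf hC hs, add_sub_cancel_left]
  have hz0 : z ≠ 0 := ne_zero_of_re_pos hz
  have hz1 : 1 + z ≠ 0 := ne_zero_of_re_pos (one_pos.trans hs)
  field_simp
  ring

end DirichletSeries

section PrimeNumberTheorem

lemma sum_vonMangoldt_le (n : ℕ) :
    ∑ k ∈ Finset.Icc 1 n, ArithmeticFunction.vonMangoldt k ≤ (Real.log 4 + 4) * n := by
  have hψ := Chebyshev.psi_le_const_mul_self (x := n) n.cast_nonneg
  rwa [Chebyshev.psi, Nat.floor_natCast] at hψ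

theorem tendsto_sum_residueClass_div {q : ℕ} [NeZero q] {a : ZMod q} (ha : IsUnit a) :
    Tendsto (fun x : ℝ ↦
      (∑ k ∈ Finset.Icc 1 ⌊x⌋₊, ArithmeticFunction.vonMangoldt.residueClass a k) / x) atTop
      (𝓝 (q.totient : ℝ)⁻¹) :=
  tendsto_sum_div_of_LSeries (ArithmeticFunction.vonMangoldt.residueClass_nonneg a)
    (fun n ↦ (Finset.sum_le_sum fun k _ ↦
      ArithmeticFunction.vonMangoldt.residueClass_le a k).trans (sum_vonMangoldt_le n))
    (ArithmeticFunction.vonMangoldt.continuousOn_LFunctionResidueClassAux a) fun s hs ↦ by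
      simpa using ArithmeticFunction.vonMangoldt.eqOn_LFunctionResidueClassAux ha hs

theorem tendsto_psi_div : Tendsto (fun x ↦ Chebyshev.psi x / x) atTop (𝓝 1) := by
  have hΛ (k : ℕ) : ArithmeticFunction.vonMangoldt.residueClass (1 : ZMod 1) k =
      ArithmeticFunction.vonMangoldt k :=
    indicator_of_mem (s := {n : ℕ | (n : ZMod 1) = 1}) (Subsingleton.elim _ _) _
  simpa [hΛ] using! tendsto_sum_residueClass_div (q := 1) isUnit_one

end PrimeNumberTheorem

end WienerIkehara

theorem log_lcm_div_tendsto_one :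
    Tendsto (fun n : ℕ => Real.log (Finset.lcm (Finset.Icc 1 n) id : ℕ) / n)
      atTop (𝓝 1) := by
  refine (WienerIkehara.tendsto_psi_div.comp tendsto_natCast_atTop_atTop).congr fun n ↦ ?_
  rw [Function.comp_apply, Chebyshev.psi_eq_log_lcmUpto, Nat.lcmUpto]
end

section
/- Let p(n) denote the n-th prime number. Then the limit as n → ∞ of p(n) / (n · log n) equals 1; that is, p(n) ~ n log n. -/
open Filter Topology

/-- `p n` is the `n`-th prime number, so `p 1 = 2`, `p 2 = 3`, … -/
noncomputable def p (n : ℕ) : ℕ := Nat.nth Nat.Prime (n - 1)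

/-!
Since `ζ` has a simple pole at `1` and no other zero or pole on the line `re s = 1`, the function
`-ζ'/ζ(s) - 1/(s - 1)` extends continuously to `1 ≤ re s`. Up to the factor `s = 1 + z`, `-ζ'/ζ` is
the Laplace transform of `B u = ψ(e^u) / e^u`, so the Laplace transform of `B - 1` extends
continuously to `0 ≤ re z`. Smoothing `B` by a nonnegative kernel whose Fourier transform has
compact support allows passing to the boundary, where the Riemann–Lebesgue lemma shows that the
smoothed function tends to the mass of the kernel. Because `e^u B(u)` is increasing, `B` can vary
only slowly on short windows, and shrinking the kernel gives `B → 1`, that is `ψ(x) ~ x`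
(Wiener–Ikehara).

Partial summation turns this into `π(x) ~ x / log x`. At the prime `x = p(n)` it reads
`n ~ p(n) / log p(n)`; hence `log n ~ log p(n)`, and multiplying yields `p(n) ~ n log n`.
-/

open MeasureTheory Set Real
open scoped FourierTransform Convolution ComplexConjugate RealInnerProductSpace

section Fourier

variable {V : Type*} [NormedAddCommGroup V] [InnerProductSpace ℝ V] [FiniteDimensional ℝ V]
  [MeasurableSpace V] [BorelSpace V]

lemma fourier_conj_comp_neg (f : V → ℂ) (ξ : V) :
    𝓕 (fun x ↦ conj (f (-x))) ξ = conj (𝓕 f ξ) := by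
  rw [Real.fourier_eq', Real.fourier_eq', ← integral_conj, ← integral_neg_eq_self]
  simp [← Complex.exp_conj, Complex.conj_ofNat]

variable (V) in
lemma exists_hasCompactSupport_fourier_nonneg :
    ∃ (φ : V → ℂ) (K : V → ℝ), Continuous φ ∧ HasCompactSupport φ ∧
      (∀ x, 𝓕 φ x = K x) ∧ 0 ≤ K ∧ Integrable K ∧ 0 < ∫ x, K x := by
  let b : ContDiffBump (0 : V) := ⟨1, 2, one_pos, one_lt_two⟩
  let f : V → ℂ := fun x ↦ b x
  have f_supp : HasCompactSupport f := b.hasCompactSupport.comp_left Complex.ofReal_zero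
  have f_smooth : ContDiff ℝ (⊤ : ℕ∞) f := Complex.ofRealCLM.contDiff.comp b.contDiff
  let F : SchwartzMap V ℂ := f_supp.toSchwartzMap f_smooth
  have f_int : Integrable f := f_smooth.continuous.integrable_of_hasCompactSupport f_supp
  have conj_fourier (x : V) : conj (𝓕 f x) = 𝓕 f x := by
    rw [← fourier_conj_comp_neg]
    simp [f, b.neg]
  have fourier_eq : 𝓕 f = (𝓕 F : SchwartzMap V ℂ) := (SchwartzMap.fourier_coe F).symm
  have fourier_cont : Continuous (𝓕 f) := fourier_eq ▸ SchwartzMap.continuous _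
  have K_int : Integrable fun x ↦ ‖𝓕 f x‖ ^ 2 := by
    have : MemLp (𝓕 f) 2 := fourier_eq ▸ SchwartzMap.memLp _ 2 volume
    simpa using this.integrable_norm_rpow two_ne_zero ENNReal.ofNat_ne_top
  refine ⟨f ⋆[ContinuousLinearMap.mul ℂ ℂ] f, fun x ↦ ‖𝓕 f x‖ ^ 2,
    f_supp.continuous_convolution_left _ f_smooth.continuous f_int.locallyIntegrable,
    f_supp.convolution _ f_supp, fun x ↦ ?_, fun x ↦ sq_nonneg _, K_int, ?_⟩
  · rw [Real.fourier_mul_convolution_eq f_int f_int]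
    nth_rw 2 [← conj_fourier]
    simp [Complex.mul_conj, Complex.normSq_eq_norm_sq]
  · refine integral_pos_of_integrable_nonneg_nonzero (x := 0) (by fun_prop) K_int
      (fun x ↦ sq_nonneg _) ?_
    have : 𝓕 f 0 = ((∫ x, b x : ℝ) : ℂ) := by simp [Real.fourier_eq', f, integral_complex_ofReal]
    simpa [this] using b.integral_pos.ne'

lemma integral_mul_fourier_sub {f φ : V → ℂ} (hf : Integrable f) (hφ : Integrable φ) (y : V) :
    ∫ u, f u * 𝓕 φ (u - y) = 𝓕⁻ (fun t ↦ φ t * 𝓕 f t) y := by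
  have fourier_translate (t : V) : 𝓕 (fun u ↦ f (u + y)) t = Real.fourierChar ⟪t, y⟫ • 𝓕 f t := by
    rw [real_inner_comm]
    exact congrFun (VectorFourier.fourierIntegral_comp_add_right _ _ (innerₗ V) f y) t
  calc ∫ u, f u * 𝓕 φ (u - y) = ∫ u, f (u + y) * 𝓕 φ u := by
        rw [← integral_add_right_eq_self _ y]
        simp
    _ = ∫ t, 𝓕 (fun u ↦ f (u + y)) t * φ t := by
        simpa using! (VectorFourier.integral_fourierIntegral_smul_eq_flip (L := innerₗ V)
          Real.continuous_fourierChar continuous_inner (hf.comp_add_right y) hφ).symm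
    _ = 𝓕⁻ (fun t ↦ φ t * 𝓕 f t) y := by
        simp only [Real.fourierInv_eq, fourier_translate, mul_comm _ (φ _), mul_smul_comm]

end Fourier

lemma fourier_indicator_Ioi_mul_exp (b : ℝ → ℂ) (σ t : ℝ) :
    𝓕 ((Ioi 0).indicator fun u ↦ b u * Complex.exp (-(σ * u))) t =
      ∫ u in Ioi 0, b u * Complex.exp (-((σ + 2 * π * t * Complex.I) * u)) := by
  rw [Real.fourier_real_eq_integral_exp_smul, ← integral_indicator measurableSet_Ioi]
  congr 1 with u
  by_cases hu : u ∈ Ioi 0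
  · simp only [indicator_of_mem hu, smul_eq_mul]
    rw [mul_left_comm, ← Complex.exp_add]
    push_cast
    ring_nf
  · simp [indicator_of_notMem hu]

lemma tendsto_integral_Ioi_exp_neg_mul {h : ℝ → ℂ} (hh : IntegrableOn h (Ioi 0)) :
    Tendsto (fun σ : ℝ ↦ ∫ u : ℝ in Ioi 0, Complex.exp (-(σ * u)) * h u) (𝓝[>] 0)
      (𝓝 (∫ u in Ioi 0, h u)) := by
  refine tendsto_integral_filter_of_dominated_convergence (‖h ·‖)
    (.of_forall fun σ ↦ ?_) ?_ hh.norm (ae_of_all _ fun u ↦ ?_)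
  · exact (Continuous.aestronglyMeasurable (by fun_prop)).mul hh.1
  · filter_upwards [self_mem_nhdsWithin] with σ (hσ : 0 < σ)
    filter_upwards [ae_restrict_mem measurableSet_Ioi] with u (hu : 0 < u)
    have : ‖Complex.exp (-(σ * u))‖ ≤ 1 := by
      simpa [Complex.norm_exp] using by positivity
    simpa using mul_le_mul_of_nonneg_right this (norm_nonneg _)
  · exact tendsto_nhdsWithin_of_tendsto_nhds (Continuous.tendsto' (by fun_prop) _ _ (by simp))

lemma integrableOn_Ioi_mul_exp {b : ℝ → ℂ} {C : ℝ} (b_meas : Measurable b)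
    (b_le : ∀ u, ‖b u‖ ≤ C) {z : ℂ} (hz : 0 < z.re) :
    IntegrableOn (fun u : ℝ ↦ b u * Complex.exp (-(z * u))) (Ioi 0) := by
  refine Integrable.bdd_mul (c := C) ?_ b_meas.aestronglyMeasurable (ae_of_all _ b_le)
  simpa [IntegrableOn] using integrableOn_exp_mul_complex_Ioi (a := -z) (by simpa using hz) 0

lemma integral_Ioi_sub_const_mul_exp {b : ℝ → ℂ} {C : ℝ} (b_meas : Measurable b)
    (b_le : ∀ u, ‖b u‖ ≤ C) (A : ℂ) {z : ℂ} (hz : 0 < z.re) :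
    ∫ u in Ioi 0, (b u - A) * Complex.exp (-(z * u)) =
      (∫ u in Ioi 0, b u * Complex.exp (-(z * u))) - A / z := by
  have integral_exp : ∫ u : ℝ in Ioi 0, Complex.exp (-(z * u)) = 1 / z := by
    simpa using integral_exp_mul_complex_Ioi (a := -z) (by simpa using hz) 0
  simp only [sub_mul]
  rw [integral_sub (integrableOn_Ioi_mul_exp b_meas b_le hz)
    (integrableOn_Ioi_mul_exp measurable_const (fun _ ↦ le_rfl) hz), integral_const_mul,
    integral_exp, mul_one_div]

lemma continuousOn_fourierInv_mul_vertical {G : ℂ → ℂ} {φ : ℝ → ℂ}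
    (G_cont : ContinuousOn G {z | 0 ≤ z.re}) (φ_cont : Continuous φ) (φ_supp : HasCompactSupport φ)
    (y : ℝ) :
    ContinuousOn (fun σ : ℝ ↦ 𝓕⁻ (fun t : ℝ ↦ φ t * G (σ + 2 * π * t * Complex.I)) y) (Ici 0) := by
  simp only [Real.fourierInv_eq]
  refine continuousOn_integral_of_compact_support φ_supp.isCompact ?_ fun σ t _ ht ↦ by
    simp [image_eq_zero_of_notMem_tsupport ht]
  have G_vertical : ContinuousOn (fun q : ℝ × ℝ ↦ G (q.1 + 2 * π * q.2 * Complex.I))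
      (Ici 0 ×ˢ univ) :=
    G_cont.comp (by fun_prop) fun q hq ↦ by simpa using hq.1
  simp only [Circle.smul_def]
  exact (show Continuous fun q : ℝ × ℝ ↦ (fourierChar (inner ℝ q.2 y) : ℂ) by fun_prop)
    |>.continuousOn.smul ((φ_cont.comp continuous_snd).continuousOn.mul G_vertical)

lemma integral_Ioi_mul_fourier_sub_of_laplace {b φ : ℝ → ℂ} {G : ℂ → ℂ} {C : ℝ}
    (b_meas : Measurable b) (b_le : ∀ u, ‖b u‖ ≤ C)
    (G_cont : ContinuousOn G {z | 0 ≤ z.re})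
    (G_eq : ∀ z : ℂ, 0 < z.re → ∫ u in Ioi 0, b u * Complex.exp (-(z * u)) = G z)
    (φ_cont : Continuous φ) (φ_supp : HasCompactSupport φ) (fourier_int : Integrable (𝓕 φ))
    (y : ℝ) :
    ∫ u in Ioi 0, b u * 𝓕 φ (u - y) = 𝓕⁻ (fun t ↦ φ t * G (2 * π * t * Complex.I)) y := by
  let f (σ : ℝ) : ℝ → ℂ := (Ioi 0).indicator fun u ↦ b u * Complex.exp (-(σ * u))
  have damped_eq (σ : ℝ) (hσ : 0 < σ) : ∫ u, f σ u * 𝓕 φ (u - y) =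
      𝓕⁻ (fun t ↦ φ t * G (σ + 2 * π * t * Complex.I)) y := by
    rw [integral_mul_fourier_sub ((integrable_indicator_iff measurableSet_Ioi).2 <|
      integrableOn_Ioi_mul_exp b_meas b_le (by simpa using hσ))
      (φ_cont.integrable_of_hasCompactSupport φ_supp)]
    congr! 3 with t
    rw [fourier_indicator_Ioi_mul_exp, G_eq _ (by simpa using hσ)]
  have lim_left : Tendsto (fun σ ↦ ∫ u, f σ u * 𝓕 φ (u - y)) (𝓝[>] 0)
      (𝓝 (∫ u in Ioi 0, b u * 𝓕 φ (u - y))) := by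
    have b_fourier_int : Integrable fun u ↦ b u * 𝓕 φ (u - y) :=
      (fourier_int.comp_sub_right y).bdd_mul b_meas.aestronglyMeasurable (ae_of_all _ b_le)
    refine (tendsto_integral_Ioi_exp_neg_mul b_fourier_int.integrableOn).congr fun σ ↦ ?_
    rw [← integral_indicator measurableSet_Ioi]
    congr 1 with u
    by_cases hu : u ∈ Ioi 0 <;> simp [f, hu, mul_assoc, mul_left_comm]
  have lim_right : Tendsto (fun σ : ℝ ↦ 𝓕⁻ (fun t ↦ φ t * G (σ + 2 * π * t * Complex.I)) y)
      (𝓝[>] 0) (𝓝 (𝓕⁻ (fun t ↦ φ t * G (2 * π * t * Complex.I)) y)) := by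
    simpa using! ((continuousOn_fourierInv_mul_vertical G_cont φ_cont φ_supp y) 0
      self_mem_Ici).mono_left (nhdsWithin_mono _ Ioi_subset_Ici_self)
  exact tendsto_nhds_unique lim_left <| lim_right.congr' <|
    eventually_nhdsWithin_of_forall fun σ hσ ↦ (damped_eq σ hσ).symm

lemma tendsto_integral_Ioi_mul_fourier_sub {b φ : ℝ → ℂ} {G : ℂ → ℂ} {C : ℝ}
    (b_meas : Measurable b) (b_le : ∀ u, ‖b u‖ ≤ C)
    (G_cont : ContinuousOn G {z | 0 ≤ z.re})
    (G_eq : ∀ z : ℂ, 0 < z.re → ∫ u in Ioi 0, b u * Complex.exp (-(z * u)) = G z)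
    (φ_cont : Continuous φ) (φ_supp : HasCompactSupport φ) (fourier_int : Integrable (𝓕 φ)) :
    Tendsto (fun y ↦ ∫ u in Ioi 0, b u * 𝓕 φ (u - y)) atTop (𝓝 0) := by
  simp only [integral_Ioi_mul_fourier_sub_of_laplace b_meas b_le G_cont G_eq φ_cont φ_supp
    fourier_int, fourierInv_eq_fourier_neg]
  exact (zero_at_infty_fourier _).comp (tendsto_neg_atTop_atBot.mono_right atBot_le_cocompact)

lemma tendsto_integral_mul_comp_add {K g : ℝ → ℂ} {A : ℂ} {C : ℝ} (K_int : Integrable K)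
    (g_meas : Measurable g) (g_le : ∀ u, ‖g u‖ ≤ C) (hg : Tendsto g atTop (𝓝 A)) :
    Tendsto (fun y ↦ ∫ v, K v * g (y + v)) atTop (𝓝 ((∫ v, K v) * A)) := by
  rw [← integral_mul_const]
  refine tendsto_integral_filter_of_dominated_convergence (fun v ↦ ‖K v‖ * C)
    (.of_forall fun y ↦ K_int.1.mul (g_meas.comp (measurable_const_add y)).aestronglyMeasurable)
    (.of_forall fun y ↦ ae_of_all _ fun v ↦ ?_)
    (K_int.norm.mul_const C) (ae_of_all _ fun v ↦ ?_)
  · rw [norm_mul]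
    gcongr
    exact g_le _
  · exact (hg.comp (tendsto_atTop_add_const_right _ v tendsto_id)).const_mul _

lemma tendsto_integral_fourier_mul_comp_add {B φ : ℝ → ℂ} {G : ℂ → ℂ} {A : ℂ} {C : ℝ}
    (B_meas : Measurable B) (B_le : ∀ u, ‖B u‖ ≤ C)
    (G_cont : ContinuousOn G {z | 0 ≤ z.re})
    (G_eq : ∀ z : ℂ, 0 < z.re → ∫ u in Ioi 0, (B u - A) * Complex.exp (-(z * u)) = G z)
    (φ_cont : Continuous φ) (φ_supp : HasCompactSupport φ) (fourier_int : Integrable (𝓕 φ)) :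
    Tendsto (fun y ↦ ∫ v, 𝓕 φ v * B (y + v)) atTop (𝓝 ((∫ v, 𝓕 φ v) * A)) := by
  let b : ℝ → ℂ := (Ioi 0).indicator fun u ↦ B u - A
  let g : ℝ → ℂ := (Ioi 0).piecewise (fun _ ↦ A) B
  have sub_le (u : ℝ) : ‖B u - A‖ ≤ C + ‖A‖ := (norm_sub_le _ _).trans (by gcongr; exact B_le u)
  have b_meas : Measurable b := (B_meas.sub_const A).indicator measurableSet_Ioi
  have g_meas : Measurable g := measurable_const.piecewise measurableSet_Ioi B_meas
  have b_le (u : ℝ) : ‖b u‖ ≤ C + ‖A‖ := (norm_indicator_le_norm_self _ _).trans (sub_le u)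
  have g_le (u : ℝ) : ‖g u‖ ≤ max ‖A‖ C := by
    by_cases hu : u ∈ Ioi 0 <;> simp [g, hu, B_le]
  have g_lim : Tendsto g atTop (𝓝 A) :=
    tendsto_const_nhds.congr' <| by
      filter_upwards [Ioi_mem_atTop 0] with u hu
      exact (piecewise_eq_of_mem (Ioi 0) (fun _ ↦ A) B hu).symm
  have B_eq (u : ℝ) : B u = b u + g u := by
    by_cases hu : u ∈ Ioi 0 <;> simp [b, g, hu]
  have b_lim : Tendsto (fun y ↦ ∫ v, 𝓕 φ v * b (y + v)) atTop (𝓝 0) := by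
    refine (tendsto_integral_Ioi_mul_fourier_sub (B_meas.sub_const A) sub_le G_cont G_eq φ_cont
      φ_supp fourier_int).congr fun y ↦ ?_
    rw [← integral_indicator measurableSet_Ioi, ← integral_add_left_eq_self _ y]
    congr 1 with v
    by_cases hv : y + v ∈ Ioi 0 <;> simp [b, hv, mul_comm]
  rw [← zero_add (_ * A)]
  refine (b_lim.add (tendsto_integral_mul_comp_add fourier_int g_meas g_le g_lim)).congr fun y ↦ ?_
  rw [← integral_add]
  · simp only [B_eq, mul_add]
  · exact fourier_int.mul_bdd (b_meas.comp (measurable_const_add y)).aestronglyMeasurable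
      (ae_of_all _ fun v ↦ b_le _)
  · exact fourier_int.mul_bdd (g_meas.comp (measurable_const_add y)).aestronglyMeasurable
      (ae_of_all _ fun v ↦ g_le _)

section Kernel

variable {K B : ℝ → ℝ} {C : ℝ}

lemma le_exp_mul_of_monotone (B_nonneg : ∀ u, 0 ≤ B u) (B_mono : Monotone fun u ↦ exp u * B u)
    {u w d : ℝ} (h : u ≤ w) (hd : w - u ≤ d) : B u ≤ exp d * B w := by
  have : B u ≤ exp (w - u) * B w := by
    rw [exp_sub, div_mul_eq_mul_div, le_div_iff₀ (exp_pos u), mul_comm]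
    exact B_mono h
  refine this.trans ?_
  gcongr
  exact B_nonneg w

lemma measurable_of_monotone_exp_mul (B_mono : Monotone fun u ↦ exp u * B u) : Measurable B := by
  have : B = fun u ↦ exp (-u) * (exp u * B u) := by
    ext u
    rw [← mul_assoc, ← exp_add, neg_add_cancel, exp_zero, one_mul]
  rw [this]
  exact measurable_exp.comp measurable_neg |>.mul B_mono.measurable

lemma integrable_kernel_mul_comp (K_int : Integrable K) (B_nonneg : ∀ u, 0 ≤ B u)
    (B_le : ∀ u, B u ≤ C) (B_mono : Monotone fun u ↦ exp u * B u) (c ε : ℝ) :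
    Integrable fun v ↦ K v * B (c + ε * v) := by
  have := measurable_of_monotone_exp_mul B_mono
  refine K_int.mul_bdd (c := C) (Measurable.aestronglyMeasurable (by fun_prop))
    (ae_of_all _ fun v ↦ ?_)
  simpa [abs_of_nonneg (B_nonneg _)] using B_le _

lemma mul_integral_Icc_le (K_nonneg : 0 ≤ K) (K_int : Integrable K)
    (B_nonneg : ∀ u, 0 ≤ B u) (B_le : ∀ u, B u ≤ C) (B_mono : Monotone fun u ↦ exp u * B u)
    {ε δ R : ℝ} (hε : 0 ≤ ε) (hδ : ε * R ≤ δ) (y : ℝ) :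
    B y * ∫ v in Icc (-R) R, K v ≤ exp (2 * δ) * ∫ v, K v * B (y + δ + ε * v) := by
  have int := (integrable_kernel_mul_comp K_int B_nonneg B_le B_mono (y + δ) ε).const_mul
    (exp (2 * δ))
  rw [← integral_const_mul, ← integral_const_mul]
  calc ∫ v in Icc (-R) R, B y * K v
      ≤ ∫ v in Icc (-R) R, exp (2 * δ) * (K v * B (y + δ + ε * v)) := by
        refine setIntegral_mono_on (K_int.const_mul _).integrableOn int.integrableOn
          measurableSet_Icc fun v ⟨hv, hv'⟩ ↦ ?_
        have : 0 ≤ ε * (R + v) := mul_nonneg hε (by linarith)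
        have : 0 ≤ ε * (R - v) := mul_nonneg hε (by linarith)
        rw [mul_comm (B y), mul_left_comm]
        exact mul_le_mul_of_nonneg_left
          (le_exp_mul_of_monotone B_nonneg B_mono (by linarith) (by linarith)) (K_nonneg v)
    _ ≤ _ := setIntegral_le_integral int <| ae_of_all _ fun v ↦
        mul_nonneg (exp_pos _).le (mul_nonneg (K_nonneg v) (B_nonneg _))

lemma integral_kernel_mul_le (K_nonneg : 0 ≤ K) (K_int : Integrable K)
    (B_nonneg : ∀ u, 0 ≤ B u) (B_le : ∀ u, B u ≤ C) (B_mono : Monotone fun u ↦ exp u * B u)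
    {ε δ R : ℝ} (hε : 0 ≤ ε) (hδ : ε * R ≤ δ) (y : ℝ) :
    ∫ v, K v * B (y - δ + ε * v) ≤
      exp (2 * δ) * B y * (∫ v, K v) + C * ((∫ v, K v) - ∫ v in Icc (-R) R, K v) := by
  have int := integrable_kernel_mul_comp K_int B_nonneg B_le B_mono (y - δ) ε
  have near : ∫ v in Icc (-R) R, K v * B (y - δ + ε * v) ≤
      exp (2 * δ) * B y * ∫ v in Icc (-R) R, K v := by
    rw [← integral_const_mul]
    refine setIntegral_mono_on int.integrableOn (K_int.const_mul _).integrableOn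
      measurableSet_Icc fun v ⟨hv, hv'⟩ ↦ ?_
    have : 0 ≤ ε * (R + v) := mul_nonneg hε (by linarith)
    have : 0 ≤ ε * (R - v) := mul_nonneg hε (by linarith)
    rw [mul_comm _ (K v)]
    exact mul_le_mul_of_nonneg_left
      (le_exp_mul_of_monotone B_nonneg B_mono (by linarith) (by linarith)) (K_nonneg v)
  have far : ∫ v in (Icc (-R) R)ᶜ, K v * B (y - δ + ε * v) ≤
      C * ((∫ v, K v) - ∫ v in Icc (-R) R, K v) := by
    rw [← setIntegral_compl measurableSet_Icc K_int, ← integral_const_mul]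
    refine setIntegral_mono int.integrableOn (K_int.const_mul _).integrableOn fun v ↦ ?_
    rw [mul_comm C]
    exact mul_le_mul_of_nonneg_left (B_le _) (K_nonneg v)
  have Icc_le : ∫ v in Icc (-R) R, K v ≤ ∫ v, K v :=
    setIntegral_le_integral K_int (ae_of_all _ K_nonneg)
  rw [← integral_add_compl measurableSet_Icc int]
  refine add_le_add (near.trans ?_) far
  gcongr
  exact mul_nonneg (exp_pos _).le (B_nonneg y)

lemma tendsto_of_tendsto_integral_kernel {A : ℝ} (K_nonneg : 0 ≤ K) (K_int : Integrable K)
    (K_pos : 0 < ∫ v, K v) (B_nonneg : ∀ u, 0 ≤ B u) (B_le : ∀ u, B u ≤ C)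
    (B_mono : Monotone fun u ↦ exp u * B u)
    (smoothed : ∀ ε > 0, Tendsto (fun y ↦ ∫ v, K v * B (y + ε * v)) atTop (𝓝 ((∫ v, K v) * A))) :
    Tendsto B atTop (𝓝 A) := by
  set m := ∫ v, K v
  let I : ℝ → ℝ := fun R ↦ ∫ v in Icc (-R) R, K v
  have I_lim : Tendsto I atTop (𝓝 m) :=
    (aecover_Icc tendsto_neg_atTop_atBot tendsto_id).integral_tendsto_of_countably_generated K_int
  -- At scale `ε = R⁻²`, averaging over the window `[-R, R]` moves the argument by at most `R⁻¹`.
  have window {R : ℝ} (hR : 0 < R) : R⁻¹ ^ 2 * R ≤ R⁻¹ := by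
    rw [pow_two, inv_mul_cancel_right₀ hR.ne']
  have exp_lim : Tendsto (fun R : ℝ ↦ exp (2 * R⁻¹)) atTop (𝓝 1) := by
    simpa using (tendsto_inv_atTop_zero.const_mul 2).rexp
  refine tendsto_order.2 ⟨fun a ha ↦ ?_, fun a ha ↦ ?_⟩
  · have lower_lim : Tendsto (fun R ↦ (m * A - C * (m - I R)) / (exp (2 * R⁻¹) * m)) atTop
        (𝓝 A) := by
      have := (((I_lim.const_sub m).const_mul C).const_sub (m * A)).div (exp_lim.mul_const m)
        (by simpa using K_pos.ne')
      rwa [sub_self, mul_zero, sub_zero, one_mul, mul_div_cancel_left₀ _ K_pos.ne'] at this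
    obtain ⟨R, hRa, hR⟩ :=
      ((lower_lim.eventually_const_lt ha).and (eventually_gt_atTop 0)).exists
    have smoothed_lim := (((smoothed (R⁻¹ ^ 2) (by positivity)).comp
      (tendsto_atTop_add_const_right _ (-R⁻¹) tendsto_id)).sub_const
      (C * (m - I R))).div_const (exp (2 * R⁻¹) * m)
    filter_upwards [smoothed_lim.eventually_const_lt hRa] with y hy
    refine hy.trans_le ?_
    rw [div_le_iff₀ (by positivity), sub_le_iff_le_add, ← mul_assoc, mul_comm (B y)]
    exact integral_kernel_mul_le K_nonneg K_int B_nonneg B_le B_mono (by positivity) (window hR) y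
  · have upper_lim : Tendsto (fun R ↦ exp (2 * R⁻¹) * (m * A) / I R) atTop (𝓝 A) := by
      have := (exp_lim.mul_const (m * A)).div I_lim K_pos.ne'
      rwa [one_mul, mul_div_cancel_left₀ _ K_pos.ne'] at this
    obtain ⟨R, ⟨hRa, hR⟩, I_pos⟩ := (((upper_lim.eventually_lt_const ha).and
      (eventually_gt_atTop 0)).and (I_lim.eventually_const_lt K_pos)).exists
    have smoothed_lim := (((smoothed (R⁻¹ ^ 2) (by positivity)).comp
      (tendsto_atTop_add_const_right _ R⁻¹ tendsto_id)).const_mul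
      (exp (2 * R⁻¹))).div_const (I R)
    filter_upwards [smoothed_lim.eventually_lt_const hRa] with y hy
    refine lt_of_le_of_lt ?_ hy
    rw [le_div_iff₀ I_pos]
    exact mul_integral_Icc_le K_nonneg K_int B_nonneg B_le B_mono (by positivity) (window hR) y

end Kernel

lemma integral_Ioi_comp_mul_left_mul_exp (b : ℝ → ℂ) {ε : ℝ} (hε : 0 < ε) (z : ℂ) :
    ∫ u in Ioi 0, b (ε * u) * Complex.exp (-(z * u)) =
      (ε : ℂ)⁻¹ * ∫ u in Ioi 0, b u * Complex.exp (-(z / ε * u)) := by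
  have := integral_comp_mul_left_Ioi (fun u ↦ b u * Complex.exp (-(z / ε * u))) 0 hε
  rw [mul_zero, Complex.real_smul, Complex.ofReal_inv] at this
  rw [← this]
  have : (ε : ℂ) ≠ 0 := mod_cast hε.ne'
  congr! 5 with u
  push_cast
  field_simp

theorem tendsto_of_laplace_continuousOn {B : ℝ → ℝ} {G : ℂ → ℂ} {A C : ℝ}
    (B_nonneg : ∀ u, 0 ≤ B u) (B_le : ∀ u, B u ≤ C) (B_mono : Monotone fun u ↦ exp u * B u)
    (G_cont : ContinuousOn G {z | 0 ≤ z.re})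
    (G_eq : ∀ z : ℂ, 0 < z.re → ∫ u in Ioi 0, ((B u : ℂ) - A) * Complex.exp (-(z * u)) = G z) :
    Tendsto B atTop (𝓝 A) := by
  obtain ⟨φ, K, φ_cont, φ_supp, fourier_φ, K_nonneg, K_int, K_pos⟩ :=
    exists_hasCompactSupport_fourier_nonneg ℝ
  have fourier_φ : 𝓕 φ = fun v ↦ (K v : ℂ) := funext fourier_φ
  refine tendsto_of_tendsto_integral_kernel K_nonneg K_int K_pos B_nonneg B_le B_mono
    fun ε hε ↦ ?_
  have B_meas := measurable_of_monotone_exp_mul B_mono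
  have scaled_le (u : ℝ) : ‖(B (ε * u) : ℂ)‖ ≤ C := by
    simpa [abs_of_nonneg (B_nonneg _)] using B_le _
  have scaled_laplace (z : ℂ) (hz : 0 < z.re) :
      ∫ u in Ioi 0, ((B (ε * u) : ℂ) - A) * Complex.exp (-(z * u)) = (ε : ℂ)⁻¹ * G (z / ε) := by
    rw [integral_Ioi_comp_mul_left_mul_exp (fun u ↦ (B u : ℂ) - A) hε,
      G_eq _ (by simpa using by positivity)]
  have scaled_cont : ContinuousOn (fun z ↦ (ε : ℂ)⁻¹ * G (z / ε)) {z | 0 ≤ z.re} :=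
    continuousOn_const.mul <| G_cont.comp (by fun_prop) fun z (hz : 0 ≤ z.re) ↦ by
      simpa using by positivity
  have lim := (tendsto_integral_fourier_mul_comp_add (φ := φ) (by fun_prop) scaled_le scaled_cont
    scaled_laplace φ_cont φ_supp (fourier_φ ▸ K_int.ofReal)).comp
    (tendsto_id.atTop_div_const hε)
  simp only [fourier_φ, ← Complex.ofReal_mul, integral_complex_ofReal] at lim
  have real_lim := (Complex.continuous_re.tendsto _).comp lim
  simp only [Complex.ofReal_re] at real_lim
  refine real_lim.congr fun y ↦ ?_
  simp [mul_add, mul_div_cancel₀ _ hε.ne']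

/-- The summatory function `x ↦ ∑_{1 ≤ n ≤ x} f n` of an arithmetic function. -/
noncomputable def summatory (f : ℕ → ℝ) (x : ℝ) : ℝ := ∑ n ∈ Finset.Icc 1 ⌊x⌋₊, f n

section Summatory

variable {f : ℕ → ℝ}

lemma summatory_nonneg (f_nonneg : ∀ n, 0 ≤ f n) (x : ℝ) : 0 ≤ summatory f x :=
  Finset.sum_nonneg fun n _ ↦ f_nonneg n

lemma monotone_summatory (f_nonneg : ∀ n, 0 ≤ f n) : Monotone (summatory f) := fun _ _ h ↦
  Finset.sum_le_sum_of_subset_of_nonneg (Finset.Icc_subset_Icc_right (Nat.floor_mono h))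
    fun n _ _ ↦ f_nonneg n

lemma exists_summatory_le_mul
    (hO : (fun n ↦ ∑ k ∈ Finset.Icc 1 n, f k) =O[atTop] fun n : ℕ ↦ (n : ℝ)) :
    ∃ C, ∀ x, 0 ≤ x → summatory f x ≤ C * x := by
  obtain ⟨C, C_pos, hC⟩ := Asymptotics.bound_of_isBigO_nat_atTop hO
  refine ⟨C, fun x hx ↦ ?_⟩
  rcases eq_or_ne ⌊x⌋₊ 0 with h | h
  · simpa [summatory, h] using by positivity
  · calc summatory f x ≤ C * (⌊x⌋₊ : ℝ) := by
          simpa [summatory] using (le_abs_self _).trans (hC (Nat.cast_ne_zero.2 h))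
      _ ≤ C * x := by gcongr; exact Nat.floor_le hx

lemma integral_Ioi_one_mul_cpow (g : ℝ → ℂ) (s : ℂ) :
    ∫ t in Ioi 1, g t * (t : ℂ) ^ (-(s + 1)) =
      ∫ u in Ioi 0, g (exp u) * Complex.exp (-(s * u)) := by
  rw [← exp_zero, ← integral_comp_exp_Ioi]
  congr! 2 with u
  have exp_ne_zero : ((exp u : ℝ) : ℂ) ≠ 0 := mod_cast (exp_pos u).ne'
  rw [Complex.cpow_def_of_ne_zero exp_ne_zero, ← Complex.ofReal_log (exp_pos u).le, log_exp,
    Complex.real_smul, Complex.ofReal_exp, mul_left_comm, ← Complex.exp_add]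
  ring_nf

lemma one_add_ne_zero_of_re_nonneg {z : ℂ} (hz : 0 ≤ z.re) : 1 + z ≠ 0 :=
  Complex.ne_zero_of_re_pos <| by simpa using by positivity

lemma integral_summatory_exp_mul_exp (f_nonneg : ∀ n, 0 ≤ f n)
    (hO : (fun n ↦ ∑ k ∈ Finset.Icc 1 n, f k) =O[atTop] fun n : ℕ ↦ (n : ℝ))
    {z : ℂ} (hz : 0 < z.re) :
    ∫ u in Ioi 0, ((summatory f (exp u) / exp u : ℝ) : ℂ) * Complex.exp (-(z * u)) =
      LSeries (fun n ↦ f n) (1 + z) / (1 + z) := by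
  rw [LSeries_eq_mul_integral_of_nonneg f zero_le_one (by simpa using hz) (by simpa using hO)
    f_nonneg, mul_div_cancel_left₀ _ (one_add_ne_zero_of_re_nonneg hz.le),
    integral_Ioi_one_mul_cpow]
  congr! 2 with u
  rw [summatory, Complex.ofReal_div, div_mul_eq_mul_div, mul_div_assoc, Complex.ofReal_exp,
    ← Complex.exp_sub]
  push_cast
  ring_nf

theorem tendsto_summatory_div_of_LSeries_sub_continuousOn {F : ℂ → ℂ} {A : ℝ}
    (f_nonneg : ∀ n, 0 ≤ f n)
    (hO : (fun n ↦ ∑ k ∈ Finset.Icc 1 n, f k) =O[atTop] fun n : ℕ ↦ (n : ℝ))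
    (F_cont : ContinuousOn F {s | 1 ≤ s.re})
    (F_eq : EqOn F (fun s ↦ LSeries (fun n ↦ f n) s - A / (s - 1)) {s | 1 < s.re}) :
    Tendsto (fun x ↦ summatory f x / x) atTop (𝓝 A) := by
  obtain ⟨C, hC⟩ := exists_summatory_le_mul hO
  let B : ℝ → ℝ := fun u ↦ summatory f (exp u) / exp u
  have B_nonneg (u : ℝ) : 0 ≤ B u := div_nonneg (summatory_nonneg f_nonneg _) (exp_pos u).le
  have B_le (u : ℝ) : B u ≤ C := (div_le_iff₀ (exp_pos u)).2 (hC _ (exp_pos u).le)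
  have B_mono : Monotone fun u ↦ exp u * B u := by
    simp only [B, mul_div_cancel₀ _ (exp_pos _).ne']
    exact (monotone_summatory f_nonneg).comp exp_monotone
  have G_cont : ContinuousOn (fun z ↦ (F (1 + z) - A) / (1 + z)) {z | 0 ≤ z.re} :=
    ((F_cont.comp (by fun_prop) fun z hz ↦ by simpa using hz).sub continuousOn_const).div
      (by fun_prop) fun z hz ↦ one_add_ne_zero_of_re_nonneg hz
  have laplace (z : ℂ) (hz : 0 < z.re) :
      ∫ u in Ioi 0, ((B u : ℂ) - A) * Complex.exp (-(z * u)) = (F (1 + z) - A) / (1 + z) := by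
    have z_ne_zero : z ≠ 0 := by rintro rfl; simp at hz
    have := one_add_ne_zero_of_re_nonneg hz.le
    have B_meas := measurable_of_monotone_exp_mul B_mono
    rw [integral_Ioi_sub_const_mul_exp (b := fun u ↦ B u) (C := C) (by fun_prop)
      (fun u ↦ by simpa [abs_of_nonneg (B_nonneg _)] using B_le u) A hz,
      integral_summatory_exp_mul_exp f_nonneg hO hz, F_eq (by simpa using hz)]
    simp only [add_sub_cancel_left]
    field_simp
    ring
  refine ((tendsto_of_laplace_continuousOn B_nonneg B_le B_mono G_cont laplace).comp
    tendsto_log_atTop).congr' ?_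
  filter_upwards [eventually_gt_atTop 0] with x hx
  simp [B, exp_log hx]

end Summatory

open Asymptotics ArithmeticFunction Chebyshev

lemma summatory_vonMangoldt (x : ℝ) : summatory (fun n ↦ Λ n) x = ψ x := rfl

theorem tendsto_summatory_residueClass_div {q : ℕ} [NeZero q] {a : ZMod q} (ha : IsUnit a) :
    Tendsto (fun x ↦ summatory (vonMangoldt.residueClass a) x / x) atTop
      (𝓝 ((q.totient : ℝ)⁻¹)) := by
  have isBigO : (fun n ↦ ∑ k ∈ Finset.Icc 1 n, vonMangoldt.residueClass a k) =O[atTop]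
      fun n : ℕ ↦ (n : ℝ) := by
    refine .of_bound (Real.log 4 + 4) (.of_forall fun n ↦ ?_)
    rw [norm_of_nonneg (Finset.sum_nonneg fun k _ ↦ vonMangoldt.residueClass_nonneg a k),
      norm_of_nonneg n.cast_nonneg]
    calc ∑ k ∈ Finset.Icc 1 n, vonMangoldt.residueClass a k
        ≤ ∑ k ∈ Finset.Icc 1 n, Λ k :=
          Finset.sum_le_sum fun k _ ↦ vonMangoldt.residueClass_le a k
      _ = ψ n := by simp [← summatory_vonMangoldt, summatory]
      _ ≤ (Real.log 4 + 4) * n := psi_le_const_mul_self n.cast_nonneg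
  refine tendsto_summatory_div_of_LSeries_sub_continuousOn (vonMangoldt.residueClass_nonneg a)
    isBigO (vonMangoldt.continuousOn_LFunctionResidueClassAux a) ?_
  simpa using vonMangoldt.eqOn_LFunctionResidueClassAux ha

theorem psi_isEquivalent_id : ψ ~[atTop] id := by
  have residueClass_eq : vonMangoldt.residueClass (1 : ZMod 1) = fun n ↦ Λ n :=
    indicator_eq_self.2 fun n _ ↦ Subsingleton.elim _ _
  have := tendsto_summatory_residueClass_div (q := 1) isUnit_one
  rw [residueClass_eq, Nat.totient_one, Nat.cast_one, inv_one] at this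
  exact isEquivalent_of_tendsto_one this

theorem theta_isEquivalent_id : θ ~[atTop] id := by
  have sqrt_isLittleO : Real.sqrt =o[atTop] (id : ℝ → ℝ) := by
    have := (isBigO_refl Real.sqrt atTop).mul_isLittleO
      ((isLittleO_const_left (c := (1 : ℝ))).2
        (.inr (tendsto_norm_atTop_atTop.comp Real.tendsto_sqrt_atTop)))
    refine (this.congr_left fun x ↦ mul_one _).congr' .rfl ?_
    filter_upwards [eventually_ge_atTop 0] with x hx using Real.mul_self_sqrt hx
  have sub_isLittleO := isBigO_psi_sub_theta_sqrt.trans_isLittleO sqrt_isLittleO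
  exact (psi_isEquivalent_id.sub_isLittleO sub_isLittleO).congr_left
    (.of_eq (sub_sub_cancel ψ θ))

theorem primeCounting_isEquivalent :
    (fun x : ℝ ↦ (Nat.primeCounting ⌊x⌋₊ : ℝ)) ~[atTop] fun x ↦ x / Real.log x := by
  have theta_div_log : (fun x ↦ θ x / Real.log x) ~[atTop] fun x ↦ x / Real.log x :=
    theta_isEquivalent_id.div .refl
  have error : (fun x ↦ x / Real.log x ^ 2) =o[atTop] fun x ↦ x / Real.log x := by
    have := (isBigO_refl (fun x ↦ x / Real.log x) atTop).mul_isLittleO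
      ((isLittleO_one_iff ℝ).2 (tendsto_inv_atTop_zero.comp Real.tendsto_log_atTop))
    simp only [Function.comp_apply, mul_one] at this
    refine this.congr_left fun x ↦ ?_
    rw [pow_two, ← div_div, ← div_eq_mul_inv]
  refine (theta_div_log.add_isLittleO
    (primeCounting_sub_theta_div_log_isBigO.trans_isLittleO error)).congr_left
    (.of_forall fun x ↦ ?_)
  exact add_sub_cancel _ _

lemma tendsto_div_log_atTop : Tendsto (fun x ↦ x / Real.log x) atTop atTop := by
  have inv_pos : ∀ᶠ x in atTop, 0 < Real.log x / x := by
    filter_upwards [eventually_gt_atTop 1] with x hx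
    exact div_pos (Real.log_pos hx) (one_pos.trans hx)
  have := Real.isLittleO_log_id_atTop.tendsto_div_nhds_zero
  refine (tendsto_inv_nhdsGT_zero.comp (tendsto_nhdsWithin_iff.2 ⟨this, inv_pos⟩)).congr fun x ↦ ?_
  exact inv_div _ _

lemma isEquivalent_mul_log_of_isEquivalent_div_log {α : Type*} {l : Filter α} {u v : α → ℝ}
    (hv : Tendsto v l atTop) (h : u ~[l] fun a ↦ v a / Real.log (v a)) :
    v ~[l] fun a ↦ u a * Real.log (u a) := by
  have log_v : Tendsto (fun a ↦ Real.log (v a)) l atTop := Real.tendsto_log_atTop.comp hv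
  have log_u : (fun a ↦ Real.log (u a)) ~[l] fun a ↦ Real.log (v a) := by
    have quotient_atTop : Tendsto (fun a ↦ v a / Real.log (v a)) l atTop :=
      tendsto_div_log_atTop.comp hv
    have loglog_isLittleO : (fun a ↦ Real.log (Real.log (v a))) =o[l] fun a ↦ Real.log (v a) :=
      isLittleO_log_id_atTop.comp_tendsto log_v
    refine (h.log quotient_atTop).trans ((IsEquivalent.refl.sub_isLittleO
      loglog_isLittleO).congr_left ?_)
    filter_upwards [hv.eventually_ne_atTop 0, log_v.eventually_ne_atTop 0] with a hv' hlog
    exact (Real.log_div hv' hlog).symm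
  refine ((h.mul log_u).congr_right ?_).symm
  filter_upwards [log_v.eventually_ne_atTop 0] with a ha
  exact div_mul_cancel₀ _ ha

lemma primeCounting_nth_prime (n : ℕ) : Nat.primeCounting (Nat.nth Nat.Prime n) = n + 1 := by
  rw [Nat.primeCounting, Nat.primeCounting', Nat.count_succ, if_pos (Nat.prime_nth_prime n)]
  exact congrArg (· + 1) (Nat.primeCounting'_nth_eq n)

theorem nth_prime_asymptotic :
    Tendsto (fun n : ℕ => (p n : ℝ) / (n * Real.log n)) atTop (𝓝 1) := by
  rw [← tendsto_add_atTop_iff_nat 1]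
  have nth_prime_atTop : Tendsto (fun n ↦ (Nat.nth Nat.Prime n : ℝ)) atTop atTop :=
    tendsto_natCast_atTop_atTop.comp
      (Nat.nth_strictMono Nat.infinite_setOfPred_prime).tendsto_atTop
  have count : (fun n : ℕ ↦ ((n + 1 : ℕ) : ℝ)) ~[atTop]
      fun n ↦ Nat.nth Nat.Prime n / Real.log (Nat.nth Nat.Prime n) := by
    simpa [Function.comp_def, primeCounting_nth_prime] using
      primeCounting_isEquivalent.comp_tendsto nth_prime_atTop
  have := isEquivalent_mul_log_of_isEquivalent_div_log nth_prime_atTop count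
  rw [isEquivalent_iff_tendsto_one] at this
  · exact this
  · filter_upwards [eventually_ge_atTop 1] with n hn
    have one_lt : (1 : ℝ) < (n + 1 : ℕ) := mod_cast Nat.lt_add_of_pos_left hn
    exact mul_ne_zero (by positivity) (Real.log_pos one_lt).ne'
end
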